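/- Let A = ⋃_{v ∈ S} (v + [0,1]³) ⊂ ℝ³, where S = {0,1}³ ∖ {(0,0,0),(1,1,1)} (the union of six closed unit cubes obtained from the 2×2×2 cube [0,2]³ by removing two diagonally opposite unit cubes). Then A is contractible, but the interior of A is not simply connected; in particular the interior of A is not contractible, so A is not a contractible region. -/

import Mathlib

/-- The closed region `Γ̄ = ⋃_{v ∈ Γ} (v + [0,1]^d) ⊂ ℝ^d` associated to `Γ ⊂ ℤ^d`. -/
def cubeClosure {d : ℕ} (Γ : Set (Fin d → ℤ)) : Set (Fin d → ℝ) :=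
  ⋃ v ∈ Γ, {x : Fin d → ℝ | ∀ i, (v i : ℝ) ≤ x i ∧ x i ≤ (v i : ℝ) + 1}

/-- A contractible region: a finite `Γ ⊂ ℤ^d` such that `Γ̄` is contractible and has
contractible interior. -/
def IsContractibleRegion {d : ℕ} (Γ : Set (Fin d → ℤ)) : Prop :=
  Γ.Finite ∧ ContractibleSpace ↥(cubeClosure Γ) ∧
    ContractibleSpace ↥(interior (cubeClosure Γ))

/-!
The closed region is star-shaped about the centre of the big cube. Passing to the interior removes
the whole diagonal: a diagonal point has equal coordinates, whereas an interior point has one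
coordinate below `1` and one above `1`. Projecting along the diagonal therefore maps the interior
to the punctured plane, and a loop around the diagonal is a section of this map over the circle.
So the circle is a retract of the interior, which cannot be simply connected because the circle is
not.
-/

open Set

section Circle

variable {X Y : Type*} [TopologicalSpace X] [TopologicalSpace Y]

theorem simplyConnectedSpace_of_leftInverse [SimplyConnectedSpace X] (r : C(X, Y)) (s : C(Y, X))
    (h : Function.LeftInverse r s) : SimplyConnectedSpace Y := by
  refine simply_connected_iff_paths_homotopic'.2
    ⟨h.surjective.pathConnectedSpace r.continuous, fun {x y} p q => ?_⟩
  have hrs : r.comp s = ContinuousMap.id Y := ContinuousMap.ext h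
  have hpq : (r.comp (s.comp p.toContinuousMap)).HomotopicRel
      (r.comp (s.comp q.toContinuousMap)) {0, 1} :=
    ContinuousMap.HomotopicRel.comp_continuousMap
      (SimplyConnectedSpace.paths_homotopic (p.map s.continuous) (q.map s.continuous)) r
  change p.toContinuousMap.HomotopicRel q.toContinuousMap {0, 1}
  simpa only [← ContinuousMap.comp_assoc, hrs, ContinuousMap.id_comp] using hpq

theorem not_exists_continuous_rightInverse_circleExp :
    ¬ ∃ s : Circle → ℝ, Continuous s ∧ Function.RightInverse s Circle.exp := by
  rintro ⟨s, hs, hexp⟩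
  -- Both sides lift `t ↦ exp t` through the covering `Circle.exp` and they agree at `0`.
  have hlift : s ∘ Circle.exp = fun t => t + s 1 :=
    Circle.isCoveringMap_exp.eq_of_comp_eq (by fun_prop) (by fun_prop)
      (funext fun t => by simp [hexp _, Circle.exp_add]) 0 (by simp)
  have hturn : s 1 = 2 * Real.pi + s 1 := by
    simpa using congrFun hlift (2 * Real.pi)
  linarith [Real.pi_pos]

theorem not_simplyConnectedSpace_circle : ¬ SimplyConnectedSpace Circle := by
  intro _
  have : LocallyPathConnectedSpace Circle :=
    ChartedSpace.locallyPathConnectedSpace (EuclideanSpace ℝ (Fin 1)) Circle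
  obtain ⟨s, ⟨-, hs⟩, -⟩ := Circle.isCoveringMap_exp.existsUnique_continuousMap_lifts
    (ContinuousMap.id Circle) 1 0 Circle.exp_zero
  exact not_exists_continuous_rightInverse_circleExp ⟨s, s.continuous, congrFun hs⟩

theorem not_simplyConnectedSpace_of_circle_section (f : C(X, ℂ)) (hf : ∀ x, f x ≠ 0)
    (γ : C(Circle, X)) (hγ : ∀ z, f (γ z) = z) : ¬ SimplyConnectedSpace X := by
  intro _
  let r : C(X, Circle) :=
    { toFun x := ⟨f x / ‖f x‖, mem_sphere_zero_iff_norm.2 (by simp [hf x])⟩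
      continuous_toFun := by
        have hnorm : ∀ x, (‖f x‖ : ℂ) ≠ 0 := fun x => by simpa using hf x
        fun_prop (disch := exact hnorm _) }
  have hr : Function.LeftInverse r γ := fun z => Circle.ext <| by
    change f (γ z) / ‖f (γ z)‖ = z
    simp [hγ, Circle.norm_coe]
  exact not_simplyConnectedSpace_circle (simplyConnectedSpace_of_leftInverse r γ hr)

end Circle

section Order

variable {ι α : Type*} [LinearOrder α]

theorem exists_ne_le_and_le [Nontrivial ι] {x : ι → α} {c : α} (hle : ∃ i, x i ≤ c)
    (hge : ∃ j, c ≤ x j) : ∃ i j, i ≠ j ∧ x i ≤ c ∧ c ≤ x j := by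
  obtain ⟨i, hi⟩ := hle
  obtain ⟨j, hj⟩ := hge
  obtain rfl | hij := eq_or_ne i j
  · obtain ⟨k, hk⟩ := exists_ne i
    rcases le_total (x k) c with hkc | hkc
    · exact ⟨k, i, hk, hkc, hj⟩
    · exact ⟨i, k, hk.symm, hi, hkc⟩
  · exact ⟨i, j, hij, hi, hj⟩

theorem exists_lt_of_sum_eq_of_exists_ne [Fintype ι] [AddCommMonoid α]
    [IsOrderedCancelAddMonoid α] {x y : ι → α} (hsum : ∑ i, x i = ∑ i, y i)
    (hne : ∃ i, x i ≠ y i) : ∃ i, x i < y i := by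
  by_contra! hle
  obtain ⟨i, hi⟩ := hne
  exact hi ((Finset.sum_eq_sum_iff_of_le fun j _ => hle j).1 hsum.symm i (Finset.mem_univ i)).symm

variable [TopologicalSpace α] [OrderTopology α] [DenselyOrdered α]

theorem interior_setOfPred_exists_le [NoMaxOrder α] (c : ι → α) :
    interior {x : ι → α | ∃ i, x i ≤ c i} = {x | ∃ i, x i < c i} := by
  have hcompl : {x : ι → α | ∃ i, x i ≤ c i} = (univ.pi fun i => Ioi (c i))ᶜ := by
    ext x
    simp
  rw [hcompl, interior_compl, closure_pi_set]
  ext x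
  simp [Pi.le_def]

theorem interior_setOfPred_exists_ge [NoMinOrder α] (c : ι → α) :
    interior {x : ι → α | ∃ i, c i ≤ x i} = {x | ∃ i, c i < x i} :=
  interior_setOfPred_exists_le (α := αᵒᵈ) c

end Order

/-- The vertices of `{0,1}^d` other than the two ends of the main diagonal. For `d = 3` they index
the six cubes of the region. -/
def offDiagonalVertices (d : ℕ) : Set (Fin d → ℤ) :=
  {v | (∀ i, v i = 0 ∨ v i = 1) ∧ v ≠ (fun _ => 0) ∧ v ≠ (fun _ => 1)}

section OffDiagonalVertices

variable {d : ℕ}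

theorem mem_cubeClosure_iff {Γ : Set (Fin d → ℤ)} {x : Fin d → ℝ} :
    x ∈ cubeClosure Γ ↔ ∃ v ∈ Γ, ∀ i, x i ∈ Icc (v i : ℝ) (v i + 1) := by
  simp [cubeClosure]

theorem cubeClosure_offDiagonalVertices_subset :
    cubeClosure (offDiagonalVertices d) ⊆
      {x | (∀ i, x i ∈ Icc (0 : ℝ) 2) ∧ (∃ i, x i ≤ 1) ∧ ∃ j, 1 ≤ x j} := by
  intro x hx
  obtain ⟨v, ⟨hv, hv0, hv1⟩, hvx⟩ := mem_cubeClosure_iff.1 hx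
  have hIcc_zero {i} (hi : v i = 0) : x i ∈ Icc (0 : ℝ) 1 := by simpa [hi] using hvx i
  have hIcc_one {i} (hi : v i = 1) : x i ∈ Icc (1 : ℝ) 2 := by
    simpa [hi, one_add_one_eq_two] using hvx i
  refine ⟨fun i => ?_, ?_, ?_⟩
  · rcases hv i with hi | hi
    · exact Icc_subset_Icc_right one_le_two (hIcc_zero hi)
    · exact Icc_subset_Icc_left zero_le_one (hIcc_one hi)
  · obtain ⟨i, hi⟩ := Function.ne_iff.1 hv1
    exact ⟨i, (hIcc_zero ((hv i).resolve_right hi)).2⟩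
  · obtain ⟨j, hj⟩ := Function.ne_iff.1 hv0
    exact ⟨j, (hIcc_one ((hv j).resolve_left hj)).1⟩

theorem mem_cubeClosure_offDiagonalVertices_of_ne {x : Fin d → ℝ} (hx : ∀ i, x i ∈ Icc (0 : ℝ) 2)
    {i j : Fin d} (hij : i ≠ j) (hi : x i ≤ 1) (hj : 1 ≤ x j) :
    x ∈ cubeClosure (offDiagonalVertices d) := by
  -- A coordinate equal to `1` is rounded up at `j` and down elsewhere.
  let v : Fin d → ℤ := fun k => if k = j ∨ 1 < x k then 1 else 0
  have hvi : v i = 0 := by simp [v, hij, hi]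
  have hvj : v j = 1 := by simp [v]
  refine mem_cubeClosure_iff.2 ⟨v, ⟨fun k => ?_, ?_, ?_⟩, fun k => ?_⟩
  · exact (ite_eq_or_eq _ _ _).symm
  · exact Function.ne_iff.2 ⟨j, by simp [hvj]⟩
  · exact Function.ne_iff.2 ⟨i, by simp [hvi]⟩
  · obtain ⟨hk0, hk2⟩ := hx k
    by_cases hk : k = j ∨ 1 < x k
    · have hk1 : 1 ≤ x k := hk.elim (fun h => h ▸ hj) le_of_lt
      simpa [v, hk, one_add_one_eq_two] using And.intro hk1 hk2
    · simpa [v, hk] using And.intro hk0 (not_lt.1 (not_or.1 hk).2)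

variable [Nontrivial (Fin d)]

theorem cubeClosure_offDiagonalVertices :
    cubeClosure (offDiagonalVertices d) =
      {x | (∀ i, x i ∈ Icc (0 : ℝ) 2) ∧ (∃ i, x i ≤ 1) ∧ ∃ j, 1 ≤ x j} := by
  refine Subset.antisymm cubeClosure_offDiagonalVertices_subset ?_
  rintro x ⟨hx, hle, hge⟩
  obtain ⟨i, j, hij, hi, hj⟩ := exists_ne_le_and_le hle hge
  exact mem_cubeClosure_offDiagonalVertices_of_ne hx hij hi hj

theorem interior_cubeClosure_offDiagonalVertices :
    interior (cubeClosure (offDiagonalVertices d)) =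
      {x | (∀ i, x i ∈ Ioo (0 : ℝ) 2) ∧ (∃ i, x i < 1) ∧ ∃ j, 1 < x j} := by
  have hbox : interior {x : Fin d → ℝ | ∀ i, x i ∈ Icc (0 : ℝ) 2} =
      {x | ∀ i, x i ∈ Ioo (0 : ℝ) 2} := by
    simpa only [Set.pi, mem_univ, forall_const, interior_Icc] using
      interior_pi_set (s := fun _ : Fin d => Icc (0 : ℝ) 2) finite_univ
  simp only [cubeClosure_offDiagonalVertices, ofPred_and, interior_inter, hbox,
    interior_setOfPred_exists_le fun _ : Fin d => (1 : ℝ),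
    interior_setOfPred_exists_ge fun _ : Fin d => (1 : ℝ)]

theorem starConvex_cubeClosure_offDiagonalVertices :
    StarConvex ℝ 1 (cubeClosure (offDiagonalVertices d)) := by
  rw [cubeClosure_offDiagonalVertices]
  rintro x ⟨hx, ⟨i, hi⟩, ⟨j, hj⟩⟩ a b ha hb hab
  exact ⟨fun k => convex_Icc 0 2 ⟨zero_le_one, one_le_two⟩ (hx k) ha hb hab,
    ⟨i, convex_Iic (1 : ℝ) self_mem_Iic hi ha hb hab⟩,
    ⟨j, convex_Ici (1 : ℝ) self_mem_Ici hj ha hb hab⟩⟩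

theorem contractibleSpace_cubeClosure_offDiagonalVertices :
    ContractibleSpace (cubeClosure (offDiagonalVertices d)) := by
  refine starConvex_cubeClosure_offDiagonalVertices.contractibleSpace ⟨1, ?_⟩
  obtain ⟨i⟩ := (inferInstance : Nonempty (Fin d))
  rw [cubeClosure_offDiagonalVertices]
  exact ⟨fun _ => ⟨zero_le_one, one_le_two⟩, ⟨i, le_rfl⟩, ⟨i, le_rfl⟩⟩

end OffDiagonalVertices

/-- The projection of `ℝ³` to the plane along the main diagonal, in the coordinates
`x₁ - x₀` and `x₂ - x₀`. The factor `4 / 3` makes `diagonalLoop` a section over the unit circle. -/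
noncomputable def diagonalProjection (x : Fin 3 → ℝ) : ℂ :=
  4 / 3 * ((x 1 - x 0 : ℝ) + (x 2 - x 0 : ℝ) * Complex.I)

/-- A loop around the main diagonal, in the plane through `(1, 1, 1)` where the coordinates sum to
`3`; the divisor `4` keeps it inside the open cube `(0, 2)³`. -/
noncomputable def diagonalLoop (z : Circle) : Fin 3 → ℝ :=
  ![1 - ((z : ℂ).re + (z : ℂ).im) / 4, 1 + (2 * (z : ℂ).re - (z : ℂ).im) / 4,
    1 + (2 * (z : ℂ).im - (z : ℂ).re) / 4]

theorem continuous_diagonalProjection : Continuous diagonalProjection := by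
  unfold diagonalProjection
  fun_prop

theorem diagonalProjection_eq_zero_iff {x : Fin 3 → ℝ} :
    diagonalProjection x = 0 ↔ ∀ i, x i = x 0 := by
  simp [diagonalProjection, Complex.ext_iff, Fin.forall_fin_succ, sub_eq_zero]

theorem continuous_diagonalLoop : Continuous diagonalLoop := by
  unfold diagonalLoop
  fun_prop

theorem diagonalProjection_diagonalLoop (z : Circle) :
    diagonalProjection (diagonalLoop z) = z := by
  rw [← Complex.re_add_im (z : ℂ)]
  simp only [diagonalProjection, diagonalLoop, Matrix.cons_val]
  push_cast
  ring

theorem diagonalLoop_mem_Ioo (z : Circle) (i : Fin 3) : diagonalLoop z i ∈ Ioo (0 : ℝ) 2 := by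
  obtain ⟨hre, hre'⟩ := abs_le.1 ((Complex.abs_re_le_norm z).trans_eq z.norm_coe)
  obtain ⟨him, him'⟩ := abs_le.1 ((Complex.abs_im_le_norm z).trans_eq z.norm_coe)
  match i with
  | 0 | 1 | 2 =>
    simp only [diagonalLoop, mem_Ioo, Matrix.cons_val]
    constructor <;> linarith

theorem sum_diagonalLoop (z : Circle) : ∑ i, diagonalLoop z i = ∑ _i : Fin 3, (1 : ℝ) := by
  simp only [diagonalLoop, Fin.sum_univ_three, Matrix.cons_val]
  ring

theorem exists_diagonalLoop_ne_one (z : Circle) : ∃ i, diagonalLoop z i ≠ 1 := by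
  by_contra! h
  have hz : diagonalProjection (diagonalLoop z) = 0 :=
    diagonalProjection_eq_zero_iff.2 fun i => (h i).trans (h 0).symm
  exact z.coe_ne_zero ((diagonalProjection_diagonalLoop z).symm.trans hz)

theorem diagonalLoop_mem_interior (z : Circle) :
    diagonalLoop z ∈ interior (cubeClosure (offDiagonalVertices 3)) := by
  rw [interior_cubeClosure_offDiagonalVertices]
  have hne := exists_diagonalLoop_ne_one z
  have hsum := sum_diagonalLoop z
  exact ⟨diagonalLoop_mem_Ioo z, exists_lt_of_sum_eq_of_exists_ne hsum hne,
    exists_lt_of_sum_eq_of_exists_ne hsum.symm (hne.imp fun _ => Ne.symm)⟩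

theorem diagonalProjection_ne_zero_of_mem_interior {x : Fin 3 → ℝ}
    (hx : x ∈ interior (cubeClosure (offDiagonalVertices 3))) : diagonalProjection x ≠ 0 := by
  rw [interior_cubeClosure_offDiagonalVertices] at hx
  obtain ⟨-, ⟨i, hi⟩, ⟨j, hj⟩⟩ := hx
  intro h
  have hij : x i = x j :=
    (diagonalProjection_eq_zero_iff.1 h i).trans (diagonalProjection_eq_zero_iff.1 h j).symm
  linarith

theorem not_simplyConnectedSpace_interior_cubeClosure_offDiagonalVertices_three :
    ¬ SimplyConnectedSpace (interior (cubeClosure (offDiagonalVertices 3))) :=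
  not_simplyConnectedSpace_of_circle_section
    ⟨fun x => diagonalProjection x, continuous_diagonalProjection.comp continuous_subtype_val⟩
    (fun x => diagonalProjection_ne_zero_of_mem_interior x.2)
    ⟨fun z => ⟨diagonalLoop z, diagonalLoop_mem_interior z⟩,
      continuous_diagonalLoop.subtype_mk _⟩
    diagonalProjection_diagonalLoop

/-- The union `A` of the six closed unit cubes obtained from the `2 × 2 × 2` cube by
removing two diagonally opposite unit cubes is contractible, but its interior is not
simply connected; in particular its interior is not contractible, so the underlying
set of six cubes is not a contractible region. -/
theorem six_cube_region_not_contractible :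
    let S : Set (Fin 3 → ℤ) :=
      {v | (∀ i, v i = 0 ∨ v i = 1) ∧ v ≠ (fun _ => 0) ∧ v ≠ (fun _ => 1)}
    ContractibleSpace ↥(cubeClosure S) ∧
    ¬ SimplyConnectedSpace ↥(interior (cubeClosure S)) ∧
    ¬ ContractibleSpace ↥(interior (cubeClosure S)) ∧
    ¬ IsContractibleRegion S := by
  intro S
  have hsc : ¬ SimplyConnectedSpace (interior (cubeClosure S)) :=
    not_simplyConnectedSpace_interior_cubeClosure_offDiagonalVertices_three
  have hcontr : ¬ ContractibleSpace (interior (cubeClosure S)) := fun _ => hsc inferInstance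
  exact ⟨contractibleSpace_cubeClosure_offDiagonalVertices, hsc, hcontr, fun h => hcontr h.2.2⟩
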